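/- Let α, β ∈ ℂ with β ≠ 0. Then there exist N ∈ ℕ and a sequence (s_n)_{n∈ℕ} of complex numbers such that for all n ≥ N, (α/n)·β·s_n² + ((α/n)·β + α/n − β)·s_n + α/n = 0, and s_n → 0 as n → ∞. -/

import Mathlib

/-!
Let `x, y` be the roots of `a X² + b X + c` with `a ≠ 0`. From `b = -a (x + y)` and `c = a x y` we
get `‖b‖ min(‖x‖, ‖y‖) ≤ 2 ‖a‖ max(‖x‖, ‖y‖) min(‖x‖, ‖y‖) = 2 ‖c‖`, so some root has norm at most
`2 ‖c‖ / ‖b‖`, whatever the size of `a`. In the intersection equation `c = α / n → 0` while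
`b → -β ≠ 0`.
-/

open Filter Polynomial Topology

theorem norm_mul_min_norm_le_of_vieta {K : Type*} [NormedField K] {a b c x y : K}
    (hsum : a * (x + y) = -b) (hprod : a * (x * y) = c) :
    ‖b‖ * min ‖x‖ ‖y‖ ≤ 2 * ‖c‖ := by
  have norm_add_le_two_max : ‖x + y‖ ≤ 2 * max ‖x‖ ‖y‖ := by
    linarith [norm_add_le x y, le_max_left ‖x‖ ‖y‖, le_max_right ‖x‖ ‖y‖]
  calc ‖b‖ * min ‖x‖ ‖y‖ = ‖a‖ * ‖x + y‖ * min ‖x‖ ‖y‖ := by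
        rw [← norm_mul, hsum, norm_neg]
    _ ≤ ‖a‖ * (2 * max ‖x‖ ‖y‖) * min ‖x‖ ‖y‖ := by gcongr
    _ = 2 * (‖a‖ * (max ‖x‖ ‖y‖ * min ‖x‖ ‖y‖)) := by ring
    _ = 2 * ‖c‖ := by rw [max_mul_min, ← norm_mul, ← norm_mul, hprod]

theorem exists_quadratic_roots_vieta {K : Type*} [Field K] [IsAlgClosed K] {a : K} (ha : a ≠ 0)
    (b c : K) :
    ∃ x y : K, a * x ^ 2 + b * x + c = 0 ∧ a * y ^ 2 + b * y + c = 0 ∧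
      a * (x + y) = -b ∧ a * (x * y) = c := by
  obtain ⟨x, hx⟩ := IsAlgClosed.exists_root (C a * X ^ 2 + C b * X + C c)
    (by rw [degree_quadratic ha]; decide)
  have hx : a * x ^ 2 + b * x + c = 0 := by simpa using hx
  have hsum : a * (x + (-b / a - x)) = -b := by field_simp; ring
  refine ⟨x, -b / a - x, hx, ?_, hsum, ?_⟩
  · linear_combination hx + (-b / a - 2 * x) * hsum
  · linear_combination x * hsum - hx

theorem exists_quadratic_root_norm_le {K : Type*} [NormedField K] [IsAlgClosed K] (a : K) {b : K}
    (hb : b ≠ 0) (c : K) :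
    ∃ x : K, a * x ^ 2 + b * x + c = 0 ∧ ‖x‖ ≤ 2 * ‖c‖ / ‖b‖ := by
  have hb_norm : 0 < ‖b‖ := norm_pos_iff.mpr hb
  rcases eq_or_ne a 0 with rfl | ha
  · refine ⟨-c / b, by field_simp; ring, ?_⟩
    rw [norm_div, norm_neg]
    gcongr
    linarith [norm_nonneg c]
  · obtain ⟨x, y, hx, hy, hsum, hprod⟩ := exists_quadratic_roots_vieta ha b c
    have hmin : min ‖x‖ ‖y‖ ≤ 2 * ‖c‖ / ‖b‖ :=
      (le_div_iff₀' hb_norm).mpr (norm_mul_min_norm_le_of_vieta hsum hprod)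
    rcases min_le_iff.mp hmin with hx_le | hy_le
    · exact ⟨x, hx, hx_le⟩
    · exact ⟨y, hy, hy_le⟩

section Asymptotics

variable {ι K : Type*} [NormedField K] [IsAlgClosed K] {l : Filter ι}

theorem exists_quadratic_root_tendsto_zero (a : ι → K) {b c : ι → K} {b₀ : K} (hb₀ : b₀ ≠ 0)
    (hb : Tendsto b l (𝓝 b₀)) (hc : Tendsto c l (𝓝 0)) :
    ∃ s : ι → K, (∀ᶠ i in l, a i * s i ^ 2 + b i * s i + c i = 0) ∧ Tendsto s l (𝓝 0) := by
  have exists_small_root : ∀ᶠ i in l, ∃ x : K,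
      a i * x ^ 2 + b i * x + c i = 0 ∧ ‖x‖ ≤ 2 * ‖c i‖ / ‖b i‖ :=
    (hb.eventually_ne hb₀).mono fun i hbi => exists_quadratic_root_norm_le (a i) hbi (c i)
  obtain ⟨s, hs⟩ := skolem.mp exists_small_root
  have bound_tendsto_zero : Tendsto (fun i => 2 * ‖c i‖ / ‖b i‖) l (𝓝 0) := by
    simpa [Pi.div_def] using (hc.norm.const_mul 2).div hb.norm (norm_ne_zero_iff.mpr hb₀)
  exact ⟨s, hs.mono fun _ => And.left,
    squeeze_zero_norm' (hs.mono fun _ => And.right) bound_tendsto_zero⟩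

theorem stmt_10_general {μ : ι → K} (hμ : Tendsto μ l (𝓝 0)) {β : K} (hβ : β ≠ 0) :
    ∃ s : ι → K,
      (∀ᶠ i in l, μ i * β * s i ^ 2 + (μ i * β + μ i - β) * s i + μ i = 0) ∧
      Tendsto s l (𝓝 0) := by
  have linear_coeff_tendsto : Tendsto (fun i => μ i * β + μ i - β) l (𝓝 (-β)) := by
    simpa using ((hμ.mul_const β).add hμ).sub_const β
  exact exists_quadratic_root_tendsto_zero _ (neg_ne_zero.mpr hβ) linear_coeff_tendsto hμ

end Asymptotics

/-- **Quadratic asymptotics from the proof of Lemma 5.7**: for `α, β ∈ ℂ` with `β ≠ 0`,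
there exist `N ∈ ℕ` and complex numbers `(s_n)` with
`(α/n)β s_n² + ((α/n)β + α/n − β) s_n + α/n = 0` for all `n ≥ N` and `s_n → 0`. -/
theorem stmt_10 (α β : ℂ) (hβ : β ≠ 0) :
    ∃ (N : ℕ) (s : ℕ → ℂ),
      (∀ n ≥ N,
        (α / (n : ℂ)) * β * s n ^ 2 + ((α / (n : ℂ)) * β + α / (n : ℂ) - β) * s n +
          α / (n : ℂ) = 0) ∧
      Filter.Tendsto s Filter.atTop (nhds 0) := by
  obtain ⟨s, hroot, hs⟩ := stmt_10_general (tendsto_const_div_atTop_nhds_zero_nat α) hβ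
  obtain ⟨N, hN⟩ := eventually_atTop.mp hroot
  exact ⟨N, s, hN, hs⟩
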